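/- Let A be a separated cocomplete V-category. The assignments a ↦ g_a with g_a(x) := A(x,a), and g ↦ a_g := sup_A(x ↦ ⨆_a g(a) ⊗ A(x,a)), are mutually inverse bijections between A and the set of maps g : A → V satisfying A(x,x') ≤ [g(x'), g(x)] for all x,x' and g(sup_A φ) = ⨅_x [φ(x), g(x)] for all φ ∈ DA (i.e. cocontinuous V-functors A → V^op). Thus A^op ≅ V-Sup(A, V^op), the isomorphism exhibiting V-Sup as a *-autonomous category with dualizing object V^op. -/

import Mathlib

/-!
The first condition on a cocontinuous functor `g : A → V^op` says exactly that `g` is itself a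
presheaf on `A`, and then the co-Yoneda formula `⨆ a, g a * A(x,a) = g x` (`iSup_mul_hom`)
identifies `a_g` with `sup g`.  The equality `A(x, sup g) = g x` follows in one direction from
`1 ≤ A(sup g, sup g) = ⨅ x, [g x, A(x, sup g)]`, in the other from
`1 ≤ ⨅ x, [g x, g x] = g (sup g)` together with functoriality of `g` (`hom_sup_eq`).
Applied to `g = A(·,a)`, this gives `A(x, a_g) = A(x, a)` for all `x`, so `a_g = a` by
separatedness.
-/

/- `V` is a commutative quantale: a complete lattice with a commutative monoid
structure `(*, 1)` distributing over arbitrary suprema. -/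
variable {V : Type*} [CommMonoid V] [CompleteLattice V] [IsQuantale V]

/-- The internal hom `[v,w]` of the commutative quantale `V`. -/
def qhom (v w : V) : V := sSup {u | u * v ≤ w}

/-- A separated cocomplete `V`-category: a `V`-category whose underlying order is
antisymmetric, equipped with `sup : DA → A` satisfying
`A(sup φ, a) = ⨅ a', [φ(a'), A(a',a)]`. -/
structure SupCat (V : Type*) [CommMonoid V] [CompleteLattice V] [IsQuantale V] where
  carrier : Type*
  hom : carrier → carrier → V
  refl : ∀ x, 1 ≤ hom x x
  trans : ∀ x y z, hom x y * hom y z ≤ hom x z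
  separated : ∀ x y, 1 ≤ hom x y → 1 ≤ hom y x → x = y
  sup : {φ : carrier → V // ∀ x y, hom x y * φ y ≤ φ x} → carrier
  hom_sup : ∀ (φ : {φ : carrier → V // ∀ x y, hom x y * φ y ≤ φ x}) (a : carrier),
      hom (sup φ) a = ⨅ a', qhom (φ.1 a') (hom a' a)

/-- The set of contravariant presheaves on a separated cocomplete `V`-category. -/
abbrev PSh (A : SupCat V) := {φ : A.carrier → V // ∀ x y, A.hom x y * φ y ≤ φ x}

/-- A cocontinuous `V`-functor `g : A → V^op`:
`A(x,x') ≤ [g(x'), g(x)]` and `g(sup_A φ) = ⨅_x [φ(x), g(x)]`. -/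
def GaloisForm (A : SupCat V) (g : A.carrier → V) : Prop :=
  (∀ x x', A.hom x x' ≤ qhom (g x') (g x)) ∧
  (∀ φ : PSh A, g (A.sup φ) = ⨅ x, qhom (φ.1 x) (g x))

theorem le_qhom_iff {u v w : V} : u ≤ qhom v w ↔ u * v ≤ w := by
  constructor
  · intro h
    refine (mul_le_mul_left h v).trans ?_
    rw [qhom, IsQuantale.sSup_mul_distrib]
    exact iSup₂_le fun _ hu => hu
  · intro h
    exact le_sSup h

/-- Representable presheaves are cocontinuous as functors `A → V^op`. -/
theorem galoisForm_hom (A : SupCat V) (a : A.carrier) :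
    GaloisForm A (fun x => A.hom x a) :=
  ⟨fun x x' => le_qhom_iff.2 (A.trans x x' a), fun φ => A.hom_sup φ a⟩

/-- Co-Yoneda formula: the presheaf in the definition of `a_g` is `g` itself. -/
theorem iSup_mul_hom (A : SupCat V) {g : A.carrier → V} (hg : GaloisForm A g) :
    (fun x => ⨆ a, g a * A.hom x a) = g := by
  funext x
  apply le_antisymm
  · refine iSup_le fun a => ?_
    rw [mul_comm]
    exact le_qhom_iff.1 (hg.1 x a)
  · refine le_iSup_of_le x ?_
    calc g x = g x * 1 := (mul_one _).symm
      _ ≤ g x * A.hom x x := mul_le_mul_right (A.refl x) _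

/-- A cocontinuous `g : A → V^op` is represented by its own supremum. -/
theorem hom_sup_eq (A : SupCat V) {g : A.carrier → V} (hg : GaloisForm A g)
    (χ : PSh A) (hχ : χ.1 = g) (x : A.carrier) : A.hom x (A.sup χ) = g x := by
  apply le_antisymm
  · have h1 : 1 ≤ g (A.sup χ) := by
      rw [hg.2 χ, hχ]
      exact le_iInf fun y => le_qhom_iff.2 (one_mul _).le
    calc A.hom x (A.sup χ) = A.hom x (A.sup χ) * 1 := (mul_one _).symm
      _ ≤ A.hom x (A.sup χ) * g (A.sup χ) := mul_le_mul_right h1 _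
      _ ≤ g x := le_qhom_iff.1 (hg.1 _ _)
  · have h1 := A.refl (A.sup χ)
    rw [A.hom_sup, hχ] at h1
    have h2 := le_qhom_iff.1 (h1.trans (iInf_le _ x))
    rwa [one_mul] at h2

/-- `a ↦ g_a := A(·,a)` and `g ↦ a_g := sup_A(x ↦ ⨆_a g(a) ⊗ A(x,a))`
are mutually inverse bijections between `A` and cocontinuous `V`-functors `A → V^op`;
thus `A^op ≅ V-Sup(A, V^op)`, exhibiting `V-Sup` as *-autonomous with dualizing
object `V^op`. -/
theorem stmt12 (A : SupCat V) :
    -- a ↦ g_a lands in cocontinuous functors A → V^op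
    (∀ a : A.carrier, GaloisForm A (fun x => A.hom x a)) ∧
    -- g_{a_g} = g
    (∀ g : A.carrier → V, GaloisForm A g →
        ∀ χ : PSh A, χ.1 = (fun x => ⨆ a, g a * A.hom x a) →
          ∀ x, A.hom x (A.sup χ) = g x) ∧
    -- a_{g_a} = a
    (∀ (a : A.carrier) (χ : PSh A),
        χ.1 = (fun x => ⨆ a', A.hom a' a * A.hom x a') → A.sup χ = a) := by
  have key : ∀ g : A.carrier → V, GaloisForm A g →
      ∀ χ : PSh A, χ.1 = (fun x => ⨆ a, g a * A.hom x a) →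
        ∀ x, A.hom x (A.sup χ) = g x := fun g hg χ hχ =>
    hom_sup_eq A hg χ (hχ.trans (iSup_mul_hom A hg))
  refine ⟨galoisForm_hom A, key, fun a χ hχ => ?_⟩
  have h := key _ (galoisForm_hom A a) χ hχ
  apply A.separated
  · exact (A.refl _).trans_eq (h _)
  · exact (A.refl a).trans_eq (h a).symm
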